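/- Let Var_n^sep denote variance with respect to the uniform probability measure on SEP(n). Then lim_{n→∞} Var_n^sep(A_n^{+,+})/n = (16 − 11√2)/2, and the same limit holds for Var_n^sep(A_n^{−,−}). -/

import Mathlib

open Finset Filter Real
open scoped Classical

/-- `σ` contains the pattern `τ` (a permutation of `Fin k` given as a function). -/
def ContainsPattern {n k : ℕ} (σ : Equiv.Perm (Fin n)) (τ : Fin k → Fin k) : Prop :=
  ∃ f : Fin k → Fin n, StrictMono f ∧ ∀ a b : Fin k, τ a < τ b ↔ σ (f a) < σ (f b)

/-- A permutation is separable iff it avoids the patterns 2413 and 3142. -/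
def Separable {n : ℕ} (σ : Equiv.Perm (Fin n)) : Prop :=
  ¬ ContainsPattern σ (![1, 3, 0, 2] : Fin 4 → Fin 4) ∧
  ¬ ContainsPattern σ (![2, 0, 3, 1] : Fin 4 → Fin 4)

/-- The set of separable permutations of `[n]`. -/
noncomputable def SEP (n : ℕ) : Finset (Equiv.Perm (Fin n)) :=
  Finset.univ.filter fun σ => Separable σ

/-- `IsAltSeq σ s l` : `l` is a strictly increasing list of indices along which the values of `σ`
alternate, starting with an ascent if `s = true` and starting with a descent if `s = false`. -/
def IsAltSeq {n : ℕ} (σ : Equiv.Perm (Fin n)) (s : Bool) (l : List (Fin n)) : Prop :=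
  l.Chain' (· < ·) ∧
  ∀ j : ℕ, ∀ hj : j + 1 < l.length,
    if decide (j % 2 = 0) = s then
      σ (l.get ⟨j, Nat.lt_of_succ_lt hj⟩) < σ (l.get ⟨j + 1, hj⟩)
    else
      σ (l.get ⟨j + 1, hj⟩) < σ (l.get ⟨j, Nat.lt_of_succ_lt hj⟩)

/-- The length of the longest alternating subsequence of `σ` of type `(s, e)`, where
`true` stands for ascent and `false` for descent.  An alternating subsequence starting with
an ascent ends with a descent iff its length is odd (and similarly in the other cases), so the
type is encoded by the parity constraint; a singleton counts as a subsequence of types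
`(+,-)` and `(-,+)` but not of types `(+,+)` and `(-,-)`. -/
noncomputable def altTypeLen {n : ℕ} (σ : Equiv.Perm (Fin n)) (s e : Bool) : ℕ :=
  sSup {k | ∃ l : List (Fin n), IsAltSeq σ s l ∧ l.length = k ∧
    k % 2 = (if s = e then 0 else 1)}

/-- The length `Aₙ(σ)` of the longest alternating subsequence of `σ`. -/
noncomputable def altLen {n : ℕ} (σ : Equiv.Perm (Fin n)) : ℕ :=
  sSup {k | ∃ l : List (Fin n), (IsAltSeq σ true l ∨ IsAltSeq σ false l) ∧
    l.length = k ∧ 1 ≤ k}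

/-- Expectation with respect to the uniform probability measure on `SEP n`. -/
noncomputable def sepExp (n : ℕ) (f : Equiv.Perm (Fin n) → ℝ) : ℝ :=
  (∑ σ ∈ SEP n, f σ) / (SEP n).card

/-- Variance with respect to the uniform probability measure on `SEP n`. -/
noncomputable def sepVar (n : ℕ) (f : Equiv.Perm (Fin n) → ℝ) : ℝ :=
  sepExp n (fun σ => (f σ - sepExp n f) ^ 2)

/-- `B₁^{+,n}(σ)`: the length of the first indecomposable block (0-indexed positions). -/
noncomputable def Bplus {n : ℕ} (σ : Equiv.Perm (Fin n)) : ℕ :=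
  sInf {j | 1 ≤ j ∧ ∀ i : Fin n, (i : ℕ) < j → (σ i : ℕ) < j}

/-- `B₁^{-,n}(σ)`: the length of the first skew indecomposable block (0-indexed positions). -/
noncomputable def Bminus {n : ℕ} (σ : Equiv.Perm (Fin n)) : ℕ :=
  sInf {j | 1 ≤ j ∧ ∀ i : Fin n, (i : ℕ) < j → n - j ≤ (σ i : ℕ)}

/-- Expectation over indecomposable separable permutations of `[n]`, i.e. the conditional
expectation under the uniform measure on `SEP n` given `{B₁^{+,n} = n}`. -/
noncomputable def indecExp (n : ℕ) (f : Equiv.Perm (Fin n) → ℝ) : ℝ :=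
  (∑ σ ∈ (SEP n).filter (fun σ => Bplus σ = n), f σ) /
    ((SEP n).filter (fun σ => Bplus σ = n)).card

/-!
Up to a bounded error, which does not affect the asymptotic variance, `altTypeLen σ s s` is the
number of letter changes in the ascent/descent word of `σ`, padded by a letter at both ends.

A separable permutation with at least two entries is either a direct sum or the complement of one,
and both operations act simply on padded words: the first concatenates them around an ascent and
the second flips every letter. For the generating functions of indecomposable permutations
weighted by `y ^ (number of changes)`, this gives a system in which the sum `p` and the difference
`q` of the series with equal and unequal padding satisfy two separate quadratic equations. Expanding
at `y = 1 + ε` expresses the first two moments through the counting series `U` and its derivatives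
`U'`, `U''`.

The linear differential equation for `U` is a recurrence for the counts, from which the ratio `r n`
of consecutive counts converges to `3 - 2√2` and `n (r n - r (n + 1))` tends to `0`. Since the exact
variance is a polynomial in three consecutive ratios and `n`, the limit follows.
-/

/-! ### Letter changes in words -/

/-- The number of letter changes in the word `a :: w`: the number of adjacent pairs of distinct
letters.  The first letter is a separate argument because it serves as padding. -/
def changes {α : Type*} [DecidableEq α] (a : α) : List α → ℕ
  | [] => 0
  | b :: w => (if a = b then 0 else 1) + changes b w

section

variable {α β : Type*} [DecidableEq α] [DecidableEq β]

theorem changes_append_cons (a c : α) (w w' : List α) :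
    changes a (w ++ c :: w') = changes a (w ++ [c]) + changes c w' := by
  induction w generalizing a with
  | nil => simp [changes]
  | cons b w ih => simp [changes, ih, add_assoc]

theorem changes_append_singleton_le (a c : α) (w : List α) :
    changes a (w ++ [c]) ≤ changes a w + 1 := by
  induction w generalizing a with
  | nil => simp only [List.nil_append, changes]; split_ifs <;> omega
  | cons b w ih => have := ih b; simp only [List.cons_append, changes]; omega

theorem changes_map {f : α → β} (hf : f.Injective) (a : α) (w : List α) :
    changes (f a) (w.map f) = changes a w := by
  induction w generalizing a with
  | nil => rfl
  | cons b w ih => simp [changes, ih, hf.eq_iff]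

theorem changes_le_changes_cons (a b : α) (w : List α) : changes a w ≤ changes a (b :: w) := by
  cases w <;> grind [changes]

theorem changes_le_of_sublist (a : α) {w w' : List α} (h : w.Sublist w') :
    changes a w ≤ changes a w' := by
  induction h generalizing a with
  | slnil => rfl
  | cons b _ ih => exact (ih a).trans (changes_le_changes_cons a b _)
  | cons_cons b _ ih => exact Nat.add_le_add_left (ih b) _

end

/-! ### Alternating sublists -/

/-- The word of ascents (`true`) and descents (`false`) of a list. -/
def ascWord {α : Type*} [LinearOrder α] : List α → List Bool
  | a :: b :: l => decide (a < b) :: ascWord (b :: l)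
  | _ => []

/-- The steps of the list alternate between ascents and descents, starting with an ascent
iff `s = true`. -/
def IsAltList {α : Type*} [LinearOrder α] (s : Bool) : List α → Prop
  | a :: b :: l => (if s then a < b else b < a) ∧ IsAltList (!s) (b :: l)
  | _ => True

section

variable {α β : Type*} [LinearOrder α] [LinearOrder β]

theorem ascWord_append (l₁ l₂ : List α) (h₁ : l₁ ≠ []) (h₂ : l₂ ≠ [])
    (h : ∀ a ∈ l₁, ∀ b ∈ l₂, a < b) :
    ascWord (l₁ ++ l₂) = ascWord l₁ ++ true :: ascWord l₂ := by
  induction l₁ with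
  | nil => exact absurd rfl h₁
  | cons a l₁ ih =>
    match l₁, l₂, h₂ with
    | [], b :: l₂, _ => simp [ascWord, h a (by simp) b (by simp)]
    | b :: l₁, l₂, _ =>
      simp only [List.cons_append, ascWord, List.cons.injEq, true_and]
      exact ih (by simp) fun x hx => h x (List.mem_cons_of_mem a hx)

theorem ascWord_map_strictMono {f : α → β} (hf : StrictMono f) (l : List α) :
    ascWord (l.map f) = ascWord l := by
  induction l with
  | nil => rfl
  | cons a l ih =>
    cases l with
    | nil => rfl
    | cons b l => exact congrArg₂ List.cons (by simp [hf.lt_iff_lt]) ih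

theorem ascWord_map_strictAnti {f : α → β} (hf : StrictAnti f) {l : List α} (hl : l.Nodup) :
    ascWord (l.map f) = (ascWord l).map not := by
  induction l with
  | nil => rfl
  | cons a l ih =>
    cases l with
    | nil => rfl
    | cons b l =>
      have hab : a ≠ b := by grind
      refine congrArg₂ List.cons ?_ (ih hl.of_cons)
      simp [hf.lt_iff_gt, ← decide_not, hab.symm.le_iff_lt]

theorem ascWord_cons_sublist (a b : α) (l : List α) :
    (ascWord (a :: l)).Sublist (ascWord (a :: b :: l)) := by
  cases l with
  | nil => exact List.nil_sublist _
  | cons c l =>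
    by_cases h : decide (a < c) = decide (b < c)
    · simp only [ascWord, h]
      exact List.sublist_cons_self _ _
    · have : decide (a < c) = decide (a < b) := by grind
      simp only [ascWord, this]
      exact (List.sublist_cons_self _ _).cons_cons _

theorem ascWord_cons_sublist_of_sublist (a : α) {l L : List α} (h : l.Sublist L) :
    (ascWord (a :: l)).Sublist (ascWord (a :: L)) := by
  induction h generalizing a with
  | slnil => exact List.Sublist.refl _
  | cons b _ ih => exact (ih a).trans (ascWord_cons_sublist a b _)
  | cons_cons b _ ih => exact (ih b).cons_cons _

theorem ascWord_sublist_of_sublist {l L : List α} (h : l.Sublist L) :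
    (ascWord l).Sublist (ascWord L) := by
  induction h with
  | slnil => exact List.Sublist.refl _
  | @cons l L b _ ih =>
    refine ih.trans ?_
    cases L with
    | nil => exact List.Sublist.refl _
    | cons c L => exact List.sublist_cons_self _ _
  | cons_cons a h _ => exact ascWord_cons_sublist_of_sublist a h

theorem IsAltList.take {s : Bool} {l : List α} (h : IsAltList s l) (k : ℕ) :
    IsAltList s (l.take k) := by
  induction l generalizing s k with
  | nil => simpa using h
  | cons a l ih =>
    match k, l with
    | 0, _ | 1, _ | _ + 1, [] => simp [IsAltList]
    | k + 2, b :: l => exact ⟨h.1, ih h.2 (k + 1)⟩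

theorem IsAltList.length_eq {s : Bool} {a : α} {l : List α} (h : IsAltList s (a :: l)) :
    (a :: l).length = 1 + changes (!s) (ascWord (a :: l)) := by
  induction l generalizing s a with
  | nil => rfl
  | cons b l ih =>
    have hs : decide (a < b) = s := by
      have := h.1
      cases s <;> grind
    have := ih h.2
    simp_all [ascWord, changes, add_comm]

theorem IsAltList.length_le {s : Bool} {l L : List α} (h : IsAltList s l) (hL : l.Sublist L) :
    l.length ≤ 1 + changes (!s) (ascWord L) := by
  cases l with
  | nil => exact Nat.zero_le _
  | cons a l =>
    rw [h.length_eq]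
    exact Nat.add_le_add_left (changes_le_of_sublist _ (ascWord_sublist_of_sublist hL)) 1

-- The bound on the first entry lets the sublist be prolonged to the left.
theorem exists_isAltList_cons {s : Bool} {a : α} {L : List α} (hL : (a :: L).Nodup) :
    ∃ (x : α) (l : List α), IsAltList s (x :: l) ∧ (x :: l).Sublist (a :: L) ∧
      (if s then x ≤ a else a ≤ x) ∧
      (x :: l).length = 1 + changes (!s) (ascWord (a :: L)) := by
  induction L generalizing s a with
  | nil => exact ⟨a, [], by simp [IsAltList, ascWord, changes]⟩
  | cons b L ih =>
    have hab : a ≠ b := by grind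
    by_cases hs : decide (a < b) = s
    · obtain ⟨x, l, hl, hsub, hx, hlen⟩ := ih (s := !s) hL.of_cons
      refine ⟨a, x :: l, ⟨?_, hl⟩, hsub.cons_cons a, by simp, ?_⟩
      · cases s <;> grind
      · rw [List.length_cons, hlen]
        simp [ascWord, hs, changes, add_comm]
    · obtain ⟨x, l, hl, hsub, hx, hlen⟩ := ih (s := s) hL.of_cons
      refine ⟨x, l, hl, hsub.cons a, ?_, ?_⟩
      · cases s <;> grind
      · rw [hlen]
        simp [ascWord, Bool.eq_not_iff.2 hs, changes]

theorem exists_isAltList_length_eq_iff {s : Bool} {L : List α} (hL : L.Nodup) (h : L ≠ [])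
    {k : ℕ} : (∃ l : List α, l.Sublist L ∧ IsAltList s l ∧ l.length = k) ↔
      k ≤ 1 + changes (!s) (ascWord L) := by
  constructor
  · rintro ⟨l, hl, hs, rfl⟩
    exact hs.length_le hl
  · intro hk
    obtain ⟨a, L, rfl⟩ := List.exists_cons_of_ne_nil h
    obtain ⟨x, l, hs, hl, -, hlen⟩ := exists_isAltList_cons (s := s) hL
    exact ⟨(x :: l).take k, (List.take_sublist _ _).trans hl, hs.take k,
      List.length_take_of_le (hlen ▸ hk)⟩

end

/-- The word of ascents and descents of a permutation. -/
def permWord {n : ℕ} (σ : Equiv.Perm (Fin n)) : List Bool :=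
  ascWord (List.ofFn σ)

theorem isAltList_map_iff {ι α : Type*} [LinearOrder α] (f : ι → α) (s : Bool) (l : List ι) :
    IsAltList s (l.map f) ↔ ∀ j : ℕ, ∀ hj : j + 1 < l.length,
      if decide (j % 2 = 0) = s then f l[j] < f l[j + 1] else f l[j + 1] < f l[j] := by
  induction l generalizing s with
  | nil => simp [IsAltList]
  | cons a l ih =>
    cases l with
    | nil => simp [IsAltList]
    | cons b l =>
      have hparity (j : ℕ) : (decide (j % 2 = 0) = !s) ↔ (decide ((j + 1) % 2 = 0) = s) := by
        cases s <;> simp <;> omega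
      have step : IsAltList s ((a :: b :: l).map f) ↔
          (if s then f a < f b else f b < f a) ∧ IsAltList (!s) ((b :: l).map f) := Iff.rfl
      rw [step, ih]
      constructor
      · rintro ⟨h₀, h⟩ (_ | j) hj
        · cases s <;> simpa using h₀
        · exact (if_congr (hparity j) rfl rfl).mp (h j (by simpa using hj))
      · refine fun h => ⟨?_, fun j hj => ?_⟩
        · have := h 0 (by simp)
          cases s <;> simpa using this
        · exact (if_congr (hparity j) rfl rfl).mpr (h (j + 1) (by simpa using hj))

theorem isAltSeq_iff {n : ℕ} (σ : Equiv.Perm (Fin n)) (s : Bool) (l : List (Fin n)) :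
    IsAltSeq σ s l ↔ l.Sublist (List.finRange n) ∧ IsAltList s (l.map σ) := by
  refine and_congr ?_ (isAltList_map_iff σ s l).symm
  refine List.isChain_iff_pairwise.trans
    ⟨fun h => ?_, fun h => (List.pairwise_lt_finRange n).sublist h⟩
  exact List.sublist_of_subperm_of_pairwise (r := (· ≤ ·))
    (List.subperm_of_subset (h.imp ne_of_lt) fun x _ => List.mem_finRange x)
    (h.imp le_of_lt) ((List.pairwise_lt_finRange n).imp le_of_lt)

theorem exists_isAltSeq_length_eq_iff {n : ℕ} (hn : 0 < n) (σ : Equiv.Perm (Fin n)) {s : Bool}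
    {k : ℕ} : (∃ l, IsAltSeq σ s l ∧ l.length = k) ↔ k ≤ 1 + changes (!s) (permWord σ) := by
  rw [permWord, ← exists_isAltList_length_eq_iff (List.nodup_ofFn.2 σ.injective)
    (by simpa using hn.ne'), List.ofFn_eq_map]
  simp [isAltSeq_iff, List.sublist_map_iff, and_assoc]

theorem altTypeLen_self {n : ℕ} (hn : 0 < n) (σ : Equiv.Perm (Fin n)) (s : Bool) :
    altTypeLen σ s s = 2 * ((1 + changes (!s) (permWord σ)) / 2) := by
  simp only [altTypeLen, ← and_assoc, exists_and_right, exists_isAltSeq_length_eq_iff hn, if_true]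
  exact IsGreatest.csSup_eq ⟨⟨by omega, by omega⟩, fun k hk => by have := hk.1; have := hk.2; omega⟩

/-! ### Patterns and cuts of sequences -/

/-- The sequence `f` contains the pattern `τ`.  This is `ContainsPattern` when `f` is a
permutation; arbitrary linearly ordered values make restriction and order reversal available. -/
def HasPattern {n k : ℕ} {α β : Type*} [LT α] [LT β] (f : Fin n → α) (τ : Fin k → β) : Prop :=
  ∃ e : Fin k → Fin n, StrictMono e ∧ ∀ a b, τ a < τ b ↔ f (e a) < f (e b)

/-- The sequence `f` avoids the patterns `2413` and `3142`. -/
def SeparableSeq {n : ℕ} {α : Type*} [LT α] (f : Fin n → α) : Prop :=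
  ¬ HasPattern f (![1, 3, 0, 2] : Fin 4 → Fin 4) ∧ ¬ HasPattern f (![2, 0, 3, 1] : Fin 4 → Fin 4)

/-- Every value in the first `k` positions is smaller than every later value. -/
def IsCut {n : ℕ} {α : Type*} [LT α] (f : Fin n → α) (k : ℕ) : Prop :=
  ∀ i j : Fin n, (i : ℕ) < k → k ≤ (j : ℕ) → f i < f j

/-- The sequence has a cut into two nonempty parts. -/
def SumDecomposable {n : ℕ} {α : Type*} [LT α] (f : Fin n → α) : Prop :=
  ∃ k, 0 < k ∧ k < n ∧ IsCut f k

section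

variable {n k l m : ℕ} {α β γ : Type*} [LinearOrder α] [LinearOrder β] [LinearOrder γ]

theorem hasPattern_comp_left_iff {g : α → β} (hg : StrictMono g) (f : Fin n → α)
    (τ : Fin k → γ) : HasPattern (g ∘ f) τ ↔ HasPattern f τ := by
  simp only [HasPattern, Function.comp_apply, hg.lt_iff_lt]

theorem HasPattern.of_comp_right {f : Fin n → α} {e : Fin m → Fin n} (he : StrictMono e)
    {τ : Fin k → γ} : HasPattern (f ∘ e) τ → HasPattern f τ :=
  fun ⟨e', he', h⟩ => ⟨e ∘ e', he.comp he', h⟩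

theorem hasPattern_toDual_comp_iff (f : Fin n → α) (τ : Fin k → γ) :
    HasPattern (OrderDual.toDual ∘ f) τ ↔ HasPattern f (OrderDual.toDual ∘ τ) :=
  exists_congr fun _ => and_congr_right fun _ => forall_comm

theorem hasPattern_congr (f : Fin n → α) {τ : Fin k → β} {τ' : Fin k → γ}
    (h : ∀ a b, τ a < τ b ↔ τ' a < τ' b) : HasPattern f τ ↔ HasPattern f τ' := by
  simp only [HasPattern, h]

theorem hasPattern_of_isCut_iff {f : Fin (m + l) → α} (hf : IsCut f m) {τ : Fin k → γ}
    (hτ : ¬ SumDecomposable τ) : HasPattern f τ ↔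
      HasPattern (f ∘ Fin.castAdd l) τ ∨ HasPattern (f ∘ Fin.natAdd m) τ := by
  refine ⟨?_, fun h => h.elim (.of_comp_right (Fin.strictMono_castAdd l))
    (.of_comp_right (Fin.strictMono_natAdd m))⟩
  rintro ⟨e, he, h⟩
  by_cases hlt : ∀ a, (e a : ℕ) < m
  · exact .inl ⟨fun a => (e a).castLT (hlt a), fun a b hab => he hab, h⟩
  by_cases hge : ∀ a, m ≤ (e a : ℕ)
  · have hsub (a : Fin k) : ∃ i, Fin.natAdd m i = e a :=
      ⟨⟨e a - m, by have := hge a; omega⟩, Fin.ext (Nat.add_sub_of_le (hge a))⟩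
    choose e' he' using hsub
    refine .inr ⟨e', fun a b hab => ?_, fun a b => ?_⟩
    · rw [← (Fin.strictMono_natAdd m).lt_iff_lt, he', he']
      exact he hab
    · rw [h, Function.comp_apply, Function.comp_apply, he', he']
  -- The pattern straddles the cut, so it has a cut itself.
  push Not at hlt hge
  obtain ⟨p, hp⟩ := hge
  obtain ⟨q, hq, hmin⟩ := wellFounded_lt.has_min {a | m ≤ (e a : ℕ)} hlt
  refine absurd ⟨q, ?_, q.2, fun i j hi hj => (h i j).2 (hf _ _ ?_ ?_)⟩ hτ
  · refine (Nat.zero_le p).trans_lt (lt_of_not_ge fun hqp => ?_)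
    exact hp.not_ge (hq.trans (he.monotone hqp))
  · exact lt_of_not_ge fun hi' => hmin i hi' hi
  · exact hq.trans (he.monotone hj)

theorem isCut_comp_left_iff {g : α → β} (hg : StrictMono g) (f : Fin n → α) (k : ℕ) :
    IsCut (g ∘ f) k ↔ IsCut f k := by
  simp only [IsCut, Function.comp_apply, hg.lt_iff_lt]

theorem isCut_of_le (f : Fin n → α) (h : n ≤ k) : IsCut f k :=
  fun _ j _ hj => absurd (h.trans hj) j.2.not_ge

theorem IsCut.isCut_comp_castAdd_iff {f : Fin (m + l) → α} (hf : IsCut f m) (hk : k ≤ m) :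
    IsCut (f ∘ Fin.castAdd l) k ↔ IsCut f k := by
  refine ⟨fun h i j hi hj => ?_, fun h i j hi hj => h _ _ hi hj⟩
  rcases lt_or_ge (j : ℕ) m with hjm | hmj
  · exact h (i.castLT (hi.trans_le hk)) (j.castLT hjm) hi hj
  · exact hf i j (hi.trans_le hk) hmj

theorem IsCut.ascWord_ofFn {f : Fin (m + l) → α} (hf : IsCut f m) (hm : 0 < m) (hl : 0 < l) :
    ascWord (List.ofFn f) = ascWord (List.ofFn (f ∘ Fin.castAdd l)) ++
      true :: ascWord (List.ofFn (f ∘ Fin.natAdd m)) := by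
  rw [List.ofFn_add]
  refine ascWord_append _ _ (by simpa using hm.ne') (by simpa using hl.ne') fun a ha b hb => ?_
  obtain ⟨i, rfl⟩ := (List.mem_ofFn' _ _).1 ha
  obtain ⟨j, rfl⟩ := (List.mem_ofFn' _ _).1 hb
  exact hf _ _ i.2 (Nat.le_add_right m j)

theorem not_sumDecomposable_2413 : ¬ SumDecomposable (![1, 3, 0, 2] : Fin 4 → Fin 4) := by
  rintro ⟨k, hk₀, hk, h⟩
  interval_cases k <;> revert h <;> unfold IsCut <;> decide

theorem not_sumDecomposable_3142 : ¬ SumDecomposable (![2, 0, 3, 1] : Fin 4 → Fin 4) := by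
  rintro ⟨k, hk₀, hk, h⟩
  interval_cases k <;> revert h <;> unfold IsCut <;> decide

theorem hasPattern_3142 {f : Fin n → α} {a b c d : Fin n} (hab : a < b) (hbc : b < c)
    (hcd : c < d) (h₁ : f b < f d) (h₂ : f d < f a) (h₃ : f a < f c) :
    HasPattern f (![2, 0, 3, 1] : Fin 4 → Fin 4) := by
  refine ⟨![a, b, c, d], Fin.strictMono_iff_lt_succ.2 fun i => ?_, fun i j => ?_⟩
  · fin_cases i <;> assumption
  · fin_cases i <;> fin_cases j <;> simp <;> grind

theorem separableSeq_comp_left_iff {g : α → β} (hg : StrictMono g) (f : Fin n → α) :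
    SeparableSeq (g ∘ f) ↔ SeparableSeq f := by
  simp only [SeparableSeq, hasPattern_comp_left_iff hg]

theorem separableSeq_toDual_comp_iff (f : Fin n → α) :
    SeparableSeq (OrderDual.toDual ∘ f) ↔ SeparableSeq f := by
  have h₁ := hasPattern_congr f (τ := OrderDual.toDual ∘ (![1, 3, 0, 2] : Fin 4 → Fin 4))
    (τ' := (![2, 0, 3, 1] : Fin 4 → Fin 4)) (by decide)
  have h₂ := hasPattern_congr f (τ := OrderDual.toDual ∘ (![2, 0, 3, 1] : Fin 4 → Fin 4))
    (τ' := (![1, 3, 0, 2] : Fin 4 → Fin 4)) (by decide)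
  simp only [SeparableSeq, hasPattern_toDual_comp_iff, h₁, h₂, and_comm]

theorem SeparableSeq.comp_right {f : Fin n → α} (hf : SeparableSeq f) {e : Fin m → Fin n}
    (he : StrictMono e) : SeparableSeq (f ∘ e) :=
  ⟨fun h => hf.1 (h.of_comp_right he), fun h => hf.2 (h.of_comp_right he)⟩

theorem separableSeq_of_isCut_iff {f : Fin (m + l) → α} (hf : IsCut f m) :
    SeparableSeq f ↔ SeparableSeq (f ∘ Fin.castAdd l) ∧ SeparableSeq (f ∘ Fin.natAdd m) := by
  simp only [SeparableSeq, hasPattern_of_isCut_iff hf not_sumDecomposable_2413,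
    hasPattern_of_isCut_iff hf not_sumDecomposable_3142]
  tauto

theorem sumDecomposable_or_of_castSucc {f : Fin (n + 1) → α} (hf : f.Injective)
    (h : ¬ HasPattern f (![2, 0, 3, 1] : Fin 4 → Fin 4))
    (hc : SumDecomposable (f ∘ Fin.castSucc)) :
    SumDecomposable f ∨ SumDecomposable (OrderDual.toDual ∘ f) := by
  obtain ⟨k, hk₀, hkn, hk⟩ := hc
  have hcut (i j : Fin (n + 1)) (hi : (i : ℕ) < k) (hkj : k ≤ (j : ℕ)) (hj : (j : ℕ) < n) :
      f i < f j := hk (i.castLT (by omega)) (j.castLT hj) hi hkj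
  -- A drop below the last value inside the first part would create the pattern `3142`.
  have hdrop (a b : Fin (n + 1)) (hab : a ≤ b) (hb : (b : ℕ) < k) (ha : f (Fin.last n) ≤ f a) :
      f (Fin.last n) ≤ f b := by
    by_contra! hlt
    have hab' : a < b := hab.lt_of_ne (by rintro rfl; exact hlt.not_ge ha)
    have hal : f (Fin.last n) ≠ f a := hf.ne (by grind)
    exact h (hasPattern_3142 hab' (c := ⟨k, by omega⟩) hb hkn hlt (ha.lt_of_ne hal)
      (hcut _ _ (hb.trans' hab') le_rfl hkn))
  obtain ⟨m, hm, hmin⟩ := wellFounded_lt.has_min {i | f (Fin.last n) ≤ f i} ⟨Fin.last n, le_rfl⟩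
  have hlt_of_lt (i : Fin (n + 1)) (hi : i < m) : f i < f (Fin.last n) :=
    lt_of_not_ge fun h => hmin i h hi
  rcases Fin.eq_zero_or_eq_succ m with rfl | ⟨m, rfl⟩
  · refine .inr ⟨n, by omega, by omega, fun i j hi hj => ?_⟩
    obtain rfl : j = Fin.last n := by grind
    have hle : f (Fin.last n) ≤ f i := by
      rcases lt_or_ge (i : ℕ) k with hik | hki
      · exact hdrop 0 i (Fin.zero_le i) hik hm
      · exact hm.trans (hcut 0 i hk₀ hki hi).le
    exact hle.lt_of_ne (hf.ne (by grind))
  · refine .inl ⟨min (m.succ : ℕ) k, by simp [hk₀], by omega, fun i j hi hj => ?_⟩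
    have him := hlt_of_lt i (by grind)
    rcases lt_or_ge (j : ℕ) n with hjn | hjn
    · rcases lt_or_ge (j : ℕ) k with hjk | hkj
      · exact him.trans_le (hdrop _ j (by grind) hjk hm)
      · exact hcut i j (by omega) hkj hjn
    · obtain rfl : j = Fin.last n := by grind
      exact him

theorem sumDecomposable_of_lt {f : Fin 2 → α} (h : f 0 < f 1) : SumDecomposable f := by
  refine ⟨1, one_pos, one_lt_two, fun i j hi hj => ?_⟩
  obtain rfl : i = 0 := by omega
  obtain rfl : j = 1 := by omega
  exact h

theorem SeparableSeq.sumDecomposable_or {f : Fin n → α} (hs : SeparableSeq f)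
    (hf : f.Injective) (hn : 2 ≤ n) :
    SumDecomposable f ∨ SumDecomposable (OrderDual.toDual ∘ f) := by
  induction n, hn using Nat.le_induction with
  | base =>
    exact (hf.ne Fin.zero_ne_one).lt_or_gt.imp sumDecomposable_of_lt sumDecomposable_of_lt
  | succ n _ ih =>
    rcases ih (hs.comp_right Fin.strictMono_castSucc)
      (hf.comp (Fin.castSucc_injective n)) with h | h
    · exact sumDecomposable_or_of_castSucc hf hs.2 h
    · exact (sumDecomposable_or_of_castSucc (OrderDual.toDual.injective.comp hf)
        ((separableSeq_toDual_comp_iff f).2 hs).2 h).symm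

theorem sumDecomposable_comp_left_iff {g : α → β} (hg : StrictMono g) (f : Fin n → α) :
    SumDecomposable (g ∘ f) ↔ SumDecomposable f := by
  simp only [SumDecomposable, isCut_comp_left_iff hg]

theorem SumDecomposable.not_toDual_comp {f : Fin n → α} (h : SumDecomposable f) :
    ¬ SumDecomposable (OrderDual.toDual ∘ f) := by
  rintro ⟨l, hl₀, hl, hl'⟩
  obtain ⟨k, hk₀, hk, hk'⟩ := h
  have hlt : f ⟨0, by omega⟩ < f ⟨n - 1, by omega⟩ := hk' _ _ hk₀ (Nat.le_sub_one_of_lt hk)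
  exact hlt.asymm (hl' ⟨0, by omega⟩ ⟨n - 1, by omega⟩ hl₀ (Nat.le_sub_one_of_lt hl))

end

/-! ### Direct sums and complements of permutations -/

/-- The complement of a permutation, which reverses the order of the values. -/
def complPerm {n : ℕ} (σ : Equiv.Perm (Fin n)) : Equiv.Perm (Fin n) := σ.trans Fin.revPerm

/-- The direct sum of two permutations: the entries of `ρ` follow those of `τ` and are larger. -/
def directSum {k l : ℕ} (τ : Equiv.Perm (Fin k)) (ρ : Equiv.Perm (Fin l)) :
    Equiv.Perm (Fin (k + l)) :=
  finSumFinEquiv.permCongr (Equiv.sumCongr τ ρ)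

section

variable {n k l m : ℕ}

theorem separable_iff (σ : Equiv.Perm (Fin n)) : Separable σ ↔ SeparableSeq σ := Iff.rfl

theorem mem_SEP {σ : Equiv.Perm (Fin n)} : σ ∈ SEP n ↔ Separable σ := by
  simp [SEP]

theorem coe_complPerm (σ : Equiv.Perm (Fin n)) :
    ⇑(complPerm σ) = Fin.revOrderIso ∘ OrderDual.toDual ∘ σ := rfl

theorem complPerm_complPerm (σ : Equiv.Perm (Fin n)) : complPerm (complPerm σ) = σ :=
  Equiv.ext fun i => Fin.rev_rev (σ i)

theorem separable_complPerm_iff (σ : Equiv.Perm (Fin n)) :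
    Separable (complPerm σ) ↔ Separable σ := by
  rw [separable_iff, separable_iff, coe_complPerm,
    separableSeq_comp_left_iff Fin.revOrderIso.strictMono, separableSeq_toDual_comp_iff]

theorem sumDecomposable_complPerm_iff (hn : 2 ≤ n) {σ : Equiv.Perm (Fin n)} (hσ : Separable σ) :
    SumDecomposable (complPerm σ) ↔ ¬ SumDecomposable σ := by
  rw [coe_complPerm, sumDecomposable_comp_left_iff Fin.revOrderIso.strictMono]
  exact ⟨fun h h' => h'.not_toDual_comp h,
    (SeparableSeq.sumDecomposable_or hσ σ.injective hn).resolve_left⟩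

theorem permWord_complPerm (σ : Equiv.Perm (Fin n)) :
    permWord (complPerm σ) = (permWord σ).map not := by
  rw [permWord, permWord, ← ascWord_map_strictAnti Fin.rev_strictAnti
    (List.nodup_ofFn.2 σ.injective), List.map_ofFn]
  rfl

theorem directSum_comp_castAdd (τ : Equiv.Perm (Fin k)) (ρ : Equiv.Perm (Fin l)) :
    directSum τ ρ ∘ Fin.castAdd l = Fin.castAdd l ∘ τ := by
  ext i
  simp [directSum, Equiv.permCongr_apply]

theorem directSum_comp_natAdd (τ : Equiv.Perm (Fin k)) (ρ : Equiv.Perm (Fin l)) :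
    directSum τ ρ ∘ Fin.natAdd k = Fin.natAdd k ∘ ρ := by
  ext i
  simp [directSum, Equiv.permCongr_apply]

theorem isCut_perm_iff (σ : Equiv.Perm (Fin n)) :
    IsCut σ k ↔ ∀ i : Fin n, (i : ℕ) < k → (σ i : ℕ) < k := by
  constructor
  · intro h i hi
    by_contra! hlt
    have hinv := Equiv.Perm.perm_symm_mapsTo_of_mapsTo σ (s := {i | k ≤ (i : ℕ)})
      fun j hj => hlt.trans (h i j hi hj).le
    exact hi.not_ge (by simpa using hinv hlt)
  · intro h i j hi hj
    have hinv := Equiv.Perm.perm_symm_mapsTo_of_mapsTo σ (s := {i | (i : ℕ) < k}) h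
    refine (h i hi).trans_le (le_of_not_gt fun hlt => hj.not_gt ?_)
    simpa using hinv hlt

theorem isCut_directSum (τ : Equiv.Perm (Fin k)) (ρ : Equiv.Perm (Fin l)) :
    IsCut (directSum τ ρ) k := by
  refine (isCut_perm_iff _).2 fun i hi => ?_
  have := congrFun (directSum_comp_castAdd τ ρ) (i.castLT hi)
  exact (congrArg Fin.val this).trans_lt (τ _).2

theorem isCut_directSum_iff (τ : Equiv.Perm (Fin k)) (ρ : Equiv.Perm (Fin l)) (hm : m ≤ k) :
    IsCut (directSum τ ρ) m ↔ IsCut τ m := by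
  rw [← (isCut_directSum τ ρ).isCut_comp_castAdd_iff hm, directSum_comp_castAdd,
    isCut_comp_left_iff (Fin.strictMono_castAdd l)]

theorem separable_directSum_iff (τ : Equiv.Perm (Fin k)) (ρ : Equiv.Perm (Fin l)) :
    Separable (directSum τ ρ) ↔ Separable τ ∧ Separable ρ := by
  rw [separable_iff, separableSeq_of_isCut_iff (isCut_directSum τ ρ), directSum_comp_castAdd,
    directSum_comp_natAdd, separableSeq_comp_left_iff (Fin.strictMono_castAdd l),
    separableSeq_comp_left_iff (Fin.strictMono_natAdd k), separable_iff, separable_iff]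

theorem permWord_directSum (hk : 0 < k) (hl : 0 < l) (τ : Equiv.Perm (Fin k))
    (ρ : Equiv.Perm (Fin l)) :
    permWord (directSum τ ρ) = permWord τ ++ true :: permWord ρ := by
  rw [permWord, (isCut_directSum τ ρ).ascWord_ofFn hk hl, directSum_comp_castAdd,
    directSum_comp_natAdd, ← List.map_ofFn, ← List.map_ofFn,
    ascWord_map_strictMono (Fin.strictMono_castAdd l),
    ascWord_map_strictMono (Fin.strictMono_natAdd k), permWord, permWord]

theorem directSum_injective :
    (fun p : Equiv.Perm (Fin k) × Equiv.Perm (Fin l) => directSum p.1 p.2).Injective :=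
  finSumFinEquiv.permCongr.injective.comp Equiv.Perm.sumCongrHom_injective

theorem exists_directSum_eq {σ : Equiv.Perm (Fin (k + l))} (h : IsCut σ k) :
    ∃ τ ρ, directSum τ ρ = σ := by
  have hmaps : Set.MapsTo (finSumFinEquiv.symm.permCongr σ)
      (Set.range (Sum.inl : Fin k → Fin k ⊕ Fin l)) (Set.range Sum.inl) := by
    rintro _ ⟨i, rfl⟩
    have hi := (isCut_perm_iff σ).1 h (Fin.castAdd l i) i.2
    refine ⟨⟨_, hi⟩, ?_⟩
    rw [Equiv.permCongr_apply, Equiv.eq_symm_apply]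
    rfl
  obtain ⟨⟨τ, ρ⟩, hτ⟩ := Equiv.Perm.mem_sumCongrHom_range_of_perm_mapsTo_inl hmaps
  exact ⟨τ, ρ, finSumFinEquiv.permCongr.eq_symm_apply.1 hτ⟩

/-! ### The first indecomposable block -/

theorem isLeast_Bplus (σ : Equiv.Perm (Fin n)) :
    IsLeast {k | 0 < k ∧ IsCut σ k} (Bplus σ) := by
  have hset : {k | 0 < k ∧ IsCut σ k} = {j | 1 ≤ j ∧ ∀ i : Fin n, (i : ℕ) < j → (σ i : ℕ) < j} :=
    Set.ext fun k => and_congr_right' (isCut_perm_iff σ)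
  rw [Bplus, ← hset]
  exact isLeast_csInf ⟨n + 1, n.succ_pos, isCut_of_le σ n.le_succ⟩

theorem Bplus_pos (σ : Equiv.Perm (Fin n)) : 0 < Bplus σ := (isLeast_Bplus σ).1.1

theorem isCut_Bplus (σ : Equiv.Perm (Fin n)) : IsCut σ (Bplus σ) := (isLeast_Bplus σ).1.2

theorem Bplus_le (hn : 0 < n) (σ : Equiv.Perm (Fin n)) : Bplus σ ≤ n :=
  (isLeast_Bplus σ).2 ⟨hn, isCut_of_le σ le_rfl⟩

theorem Bplus_lt_iff (σ : Equiv.Perm (Fin n)) : Bplus σ < n ↔ SumDecomposable σ :=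
  ⟨fun h => ⟨Bplus σ, Bplus_pos σ, h, isCut_Bplus σ⟩,
    fun ⟨_, hk₀, hkn, hk⟩ => ((isLeast_Bplus σ).2 ⟨hk₀, hk⟩).trans_lt hkn⟩

theorem Bplus_eq_iff (hk : 0 < k) (σ : Equiv.Perm (Fin n)) :
    Bplus σ = k ↔ IsCut σ k ∧ ∀ m, 0 < m → m < k → ¬ IsCut σ m := by
  constructor
  · rintro rfl
    exact ⟨isCut_Bplus σ, fun m hm hlt h => hlt.not_ge ((isLeast_Bplus σ).2 ⟨hm, h⟩)⟩
  · rintro ⟨h, hmin⟩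
    refine (isLeast_Bplus σ).unique ⟨⟨hk, h⟩, fun m hm => le_of_not_gt fun hlt => ?_⟩
    exact hmin m hm.1 hlt hm.2

theorem Bplus_directSum_eq_iff (τ : Equiv.Perm (Fin k)) (ρ : Equiv.Perm (Fin l)) :
    Bplus (directSum τ ρ) = k ↔ Bplus τ = k := by
  rcases Nat.eq_zero_or_pos k with rfl | hk
  · exact iff_of_false (Bplus_pos _).ne' (Bplus_pos _).ne'
  · simp +contextual only [Bplus_eq_iff hk, isCut_directSum, isCut_of_le τ le_rfl,
      isCut_directSum_iff τ ρ, le_of_lt]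

theorem Bplus_complPerm_lt_iff (hn : 2 ≤ n) {σ : Equiv.Perm (Fin n)} (hσ : Separable σ) :
    Bplus (complPerm σ) < n ↔ Bplus σ = n := by
  rw [Bplus_lt_iff, sumDecomposable_complPerm_iff hn hσ, ← Bplus_lt_iff, not_lt]
  exact (Bplus_le (two_pos.trans_le hn) σ).ge_iff_eq

theorem sum_Bplus_eq {M : Type*} [AddCommMonoid M] (F : Equiv.Perm (Fin (k + l)) → M) :
    ∑ σ ∈ SEP (k + l) with Bplus σ = k, F σ =
      ∑ τ ∈ SEP k with Bplus τ = k, ∑ ρ ∈ SEP l, F (directSum τ ρ) := by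
  rw [← Finset.sum_product']
  symm
  refine Finset.sum_nbij (fun p => directSum p.1 p.2) ?_ directSum_injective.injOn ?_ fun _ _ => rfl
  · rintro ⟨τ, ρ⟩ h
    simpa [mem_SEP, separable_directSum_iff, Bplus_directSum_eq_iff, and_right_comm] using h
  · intro σ hσ
    obtain ⟨hσ, hB⟩ := Finset.mem_filter.1 hσ
    obtain ⟨τ, ρ, rfl⟩ := exists_directSum_eq (hB ▸ isCut_Bplus σ)
    rw [mem_SEP, separable_directSum_iff] at hσ
    rw [Bplus_directSum_eq_iff] at hB
    exact ⟨(τ, ρ), by simp [mem_SEP, hσ, hB], rfl⟩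

-- The condition `Bplus ρ ≤ p.2` excludes the empty permutation only, for which `Bplus` is `1`.
theorem sum_Bplus_lt {M : Type*} [AddCommMonoid M] (F : ∀ n, Equiv.Perm (Fin n) → M) (n : ℕ) :
    ∑ σ ∈ SEP n with Bplus σ < n, F n σ = ∑ p ∈ antidiagonal n,
      ∑ τ ∈ SEP p.1 with Bplus τ = p.1, ∑ ρ ∈ SEP p.2 with Bplus ρ ≤ p.2,
        F (p.1 + p.2) (directSum τ ρ) := by
  rw [← Finset.sum_fiberwise_of_maps_to (t := antidiagonal n)
    (g := fun σ => (Bplus σ, n - Bplus σ))]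
  swap
  · intro σ hσ
    exact mem_antidiagonal.2 (Nat.add_sub_of_le (Finset.mem_filter.1 hσ).2.le)
  refine Finset.sum_congr rfl fun ⟨k, l⟩ hp => ?_
  obtain rfl : k + l = n := mem_antidiagonal.1 hp
  rcases Nat.eq_zero_or_pos l with rfl | hl
  · have hfib : {σ ∈ SEP (k + 0) | Bplus σ < k + 0 ∧ (Bplus σ, k + 0 - Bplus σ) = (k, 0)} = ∅ :=
      Finset.filter_false_of_mem fun σ _ => by grind
    simp only [Finset.filter_filter, hfib, fun ρ : Equiv.Perm (Fin 0) => (Bplus_pos ρ).not_ge,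
      Finset.filter_false, Finset.sum_empty, Finset.sum_const_zero]
  · have hfib : {σ ∈ SEP (k + l) | Bplus σ < k + l ∧ (Bplus σ, k + l - Bplus σ) = (k, l)} =
        {σ ∈ SEP (k + l) | Bplus σ = k} := Finset.filter_congr fun σ _ => by grind
    simp only [Finset.filter_filter, hfib, Bplus_le hl, Finset.filter_true]
    exact sum_Bplus_eq (F (k + l))

theorem sum_Bplus_eq_self {M : Type*} [AddCommMonoid M] (hn : 2 ≤ n)
    (F : Equiv.Perm (Fin n) → M) :
    ∑ σ ∈ SEP n with Bplus σ = n, F σ = ∑ σ ∈ SEP n with Bplus σ < n, F (complPerm σ) := by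
  refine Finset.sum_nbij' complPerm complPerm (fun σ h => ?_) (fun σ h => ?_)
    (fun σ _ => complPerm_complPerm σ) (fun σ _ => complPerm_complPerm σ)
    (fun σ _ => by rw [complPerm_complPerm])
  all_goals
    obtain ⟨hσ, hB⟩ := Finset.mem_filter.1 h
    rw [mem_SEP] at hσ
    rw [Finset.mem_filter, mem_SEP, separable_complPerm_iff]
    refine ⟨hσ, ?_⟩
  · exact (Bplus_complPerm_lt_iff hn hσ).2 hB
  · rwa [← Bplus_complPerm_lt_iff hn ((separable_complPerm_iff σ).2 hσ), complPerm_complPerm]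

end

/-! ### Generating functions -/

section

open PowerSeries

variable {R : Type*} [CommRing R] (y : R)

/-- Generating function of the sum-indecomposable separable permutations, weighted by `y` to the
number of letter changes in the ascent word padded by `a` on the left and `b` on the right. -/
noncomputable def indecGF (a b : Bool) : R⟦X⟧ :=
  mk fun n => ∑ σ ∈ SEP n with Bplus σ = n, y ^ changes a (permWord σ ++ [b])

/-- Generating function of the sum-decomposable separable permutations, weighted like
`indecGF`. -/
noncomputable def decGF (a b : Bool) : R⟦X⟧ :=
  mk fun n => ∑ σ ∈ SEP n with Bplus σ < n, y ^ changes a (permWord σ ++ [b])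

theorem coeff_indecGF_add_decGF (a b : Bool) (n : ℕ) :
    coeff n (indecGF y a b + decGF y a b) =
      ∑ σ ∈ SEP n with Bplus σ ≤ n, y ^ changes a (permWord σ ++ [b]) := by
  have hunion : {σ ∈ SEP n | Bplus σ ≤ n} =
      {σ ∈ SEP n | Bplus σ = n} ∪ {σ ∈ SEP n | Bplus σ < n} := by
    rw [← Finset.filter_or]
    exact Finset.filter_congr fun σ _ => le_iff_eq_or_lt
  rw [map_add, indecGF, decGF, coeff_mk, coeff_mk, hunion, Finset.sum_union]
  exact Finset.disjoint_filter.2 fun σ _ h => h.not_lt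

theorem decGF_eq (a b : Bool) :
    decGF y a b = indecGF y a true * (indecGF y true b + decGF y true b) := by
  ext n
  rw [coeff_mul, decGF, coeff_mk, sum_Bplus_lt fun n σ => y ^ changes a (permWord σ ++ [b])]
  refine Finset.sum_congr rfl fun ⟨k, l⟩ _ => ?_
  rw [coeff_indecGF_add_decGF, indecGF, coeff_mk, Finset.sum_mul_sum]
  refine Finset.sum_congr rfl fun τ hτ => Finset.sum_congr rfl fun ρ hρ => ?_
  have hk : 0 < k := (Bplus_pos τ).trans_eq (Finset.mem_filter.1 hτ).2
  have hl : 0 < l := (Bplus_pos ρ).trans_le (Finset.mem_filter.1 hρ).2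
  rw [permWord_directSum hk hl, List.append_assoc, List.cons_append, changes_append_cons, pow_add]

theorem SEP_one : SEP 1 = {1} := by
  refine Finset.eq_singleton_iff_unique_mem.2 ⟨?_, fun σ _ => Subsingleton.elim σ 1⟩
  refine mem_SEP.2 ⟨?_, ?_⟩ <;>
  · rintro ⟨f, hf, -⟩
    exact absurd (Subsingleton.elim (f 0) (f 1)) (hf Fin.zero_lt_one).ne

theorem Bplus_one : Bplus (1 : Equiv.Perm (Fin 1)) = 1 :=
  (Bplus_le one_pos 1).antisymm (Bplus_pos 1)

theorem indecGF_eq (a b : Bool) :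
    indecGF y a b = X * C (y ^ (if a = b then 0 else 1)) + decGF y (!a) (!b) := by
  ext n
  rw [map_add, coeff_mul_C, coeff_X, indecGF, decGF, coeff_mk, coeff_mk]
  match n with
  | 0 => simp [fun σ : Equiv.Perm (Fin 0) => (Bplus_pos σ).ne']
  | 1 =>
    simp [SEP_one, Finset.filter_singleton, Bplus_one, permWord, ascWord, changes]
  | n + 2 =>
    rw [if_neg (by omega), zero_mul, zero_add, sum_Bplus_eq_self (by omega)]
    refine Finset.sum_congr rfl fun σ _ => congrArg (y ^ ·) ?_
    rw [← changes_map Bool.not_injective, List.map_append, permWord_complPerm, List.map_map]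
    simp [Bool.involutive_not.comp_self]

theorem constantCoeff_indecGF (a b : Bool) : constantCoeff (indecGF y a b) = 0 := by
  simp [indecGF, fun σ : Equiv.Perm (Fin 0) => (Bplus_pos σ).ne']

theorem indecGF_system :
    (indecGF y true true - X) * (1 - indecGF y true true) =
        indecGF y true false ^ 2 ∧
      (indecGF y true false - X * C y) * (1 - indecGF y true true) =
        indecGF y true true * indecGF y true false := by
  have e₁ := indecGF_eq y true true
  have e₂ := indecGF_eq y true false
  have e₃ := indecGF_eq y false true
  have d₁ := decGF_eq y true true
  have d₂ := decGF_eq y true false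
  have d₃ := decGF_eq y false true
  have d₄ := decGF_eq y false false
  simp only [Bool.not_true, Bool.not_false, if_true, pow_zero, map_one, mul_one,
    Bool.false_eq_true, Bool.true_eq_false, if_false, pow_one] at e₁ e₂ e₃
  generalize indecGF y true true = u at *
  generalize indecGF y true false = v at *
  generalize indecGF y false true = w at *
  have h₁ : (u - X) * (1 - u) = w * v := by
    linear_combination (1 - u) * e₁ + (1 - u) * d₄ + w * d₂
  have h₂ : (w - X * C y) * (1 - u) = u * v := by
    linear_combination (1 - u) * e₃ + d₂
  have h₃ : (v - X * C y) * (1 - u) = u * w := by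
    linear_combination (1 - u) * e₂ + (1 - u) * d₃ + w * d₁
  obtain rfl : v = w := by linear_combination h₃ - h₂
  exact ⟨by rw [h₁, sq], h₂⟩

theorem indecGF_add_sub_sq :
    indecGF y true true + indecGF y true false - (indecGF y true true + indecGF y true false) ^ 2 =
      X * C (1 + y) * (1 - indecGF y true true) := by
  obtain ⟨h₁, h₂⟩ := indecGF_system y
  rw [map_add, map_one]
  linear_combination h₁ + h₂

theorem indecGF_sub_sub_sq :
    indecGF y true true - indecGF y true false - (indecGF y true true - indecGF y true false) ^ 2 =
      X * C (1 - y) * (1 - indecGF y true true) := by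
  obtain ⟨h₁, h₂⟩ := indecGF_system y
  rw [map_sub, map_one]
  linear_combination h₁ - h₂

end

/-! ### Moments -/

section

open PowerSeries

/-- The coefficientwise extraction of the `j`-th coefficient from a power series over
polynomials. -/
noncomputable def innerCoeff {S : Type*} [CommRing S] (j : ℕ) : (Polynomial S)⟦X⟧ →+ S⟦X⟧ where
  toFun f := mk fun n => (coeff n f).coeff j
  map_zero' := by ext; simp
  map_add' f g := by ext; simp

section

variable {S : Type*} [CommRing S]

theorem coeff_innerCoeff (j n : ℕ) (f : (Polynomial S)⟦X⟧) :
    coeff n (innerCoeff j f) = (coeff n f).coeff j := by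
  simp [innerCoeff]

theorem innerCoeff_mul (j : ℕ) (f g : (Polynomial S)⟦X⟧) :
    innerCoeff j (f * g) = ∑ p ∈ antidiagonal j, innerCoeff p.1 f * innerCoeff p.2 g := by
  ext n
  simp only [map_sum, coeff_mul, coeff_innerCoeff, Polynomial.finsetSum_coeff, Polynomial.coeff_mul]
  exact Finset.sum_comm

theorem innerCoeff_C (j : ℕ) (p : Polynomial S) : innerCoeff j (C p) = C (p.coeff j) := by
  ext n
  rw [coeff_innerCoeff, coeff_C, coeff_C]
  split_ifs <;> simp

theorem innerCoeff_one (j : ℕ) :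
    innerCoeff j (1 : (Polynomial S)⟦X⟧) = if j = 0 then 1 else 0 := by
  rw [← map_one C, innerCoeff_C, Polynomial.coeff_one]
  split_ifs <;> simp

theorem innerCoeff_X_mul (j : ℕ) (f : (Polynomial S)⟦X⟧) :
    innerCoeff j (X * f) = X * innerCoeff j f := by
  ext n
  cases n <;> simp [coeff_innerCoeff, coeff_succ_X_mul]

theorem innerCoeff_of_sub_sq {f g : (Polynomial S)⟦X⟧} {p : Polynomial S} (hp : p.natDegree ≤ 1)
    (h : f - f ^ 2 = C p * g) :
    innerCoeff 0 f - innerCoeff 0 f ^ 2 = C (p.coeff 0) * innerCoeff 0 g ∧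
      (1 - 2 * innerCoeff 0 f) * innerCoeff 1 f =
        C (p.coeff 0) * innerCoeff 1 g + C (p.coeff 1) * innerCoeff 0 g ∧
      (1 - 2 * innerCoeff 0 f) * innerCoeff 2 f = innerCoeff 1 f ^ 2 +
        C (p.coeff 0) * innerCoeff 2 g + C (p.coeff 1) * innerCoeff 1 g := by
  have hp₂ : p.coeff 2 = 0 := Polynomial.coeff_eq_zero_of_natDegree_lt (by omega)
  have hj (j : ℕ) := congrArg (innerCoeff j) h
  simp only [sq f, map_sub, innerCoeff_mul, innerCoeff_C] at hj
  have h₀ := hj 0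
  have h₁ := hj 1
  have h₂ := hj 2
  simp only [Finset.Nat.antidiagonal_succ, Finset.Nat.antidiagonal_zero, Finset.sum_cons,
    Finset.map_singleton, Finset.sum_singleton, Finset.map_cons, Function.Embedding.prodMap,
    Function.Embedding.coeFn_mk, Prod.map, Function.Embedding.refl_apply, Nat.succ_eq_add_one,
    zero_add, Nat.reduceAdd, hp₂, map_zero, zero_mul, add_zero] at h₀ h₁ h₂
  exact ⟨by linear_combination h₀, by linear_combination h₁, by linear_combination h₂⟩

end

/-- Generating function of the binomial moments of order `j` of the number of letter changes in
the ascent words, padded by `true` and `b`, of the sum-indecomposable separable permutations,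
obtained by expanding `indecGF` in powers of `y - 1`. -/
noncomputable def momentGF (b : Bool) (j : ℕ) : ℝ⟦X⟧ :=
  innerCoeff j (indecGF (1 + Polynomial.X) true b)

theorem coeff_momentGF (b : Bool) (j n : ℕ) : coeff n (momentGF b j) =
    ∑ σ ∈ SEP n with Bplus σ = n, ((changes true (permWord σ ++ [b])).choose j : ℝ) := by
  simp [momentGF, coeff_innerCoeff, indecGF, Polynomial.finsetSum_coeff,
    Polynomial.coeff_one_add_X_pow]

theorem constantCoeff_momentGF (b : Bool) (j : ℕ) : constantCoeff (momentGF b j) = 0 := by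
  rw [← coeff_zero_eq_constantCoeff_apply, momentGF, coeff_innerCoeff,
    coeff_zero_eq_constantCoeff_apply, constantCoeff_indecGF, Polynomial.coeff_zero]

theorem momentGF_true_add_false :
    momentGF true 0 + momentGF false 0 - (momentGF true 0 + momentGF false 0) ^ 2 =
        2 * X * (1 - momentGF true 0) ∧
      (1 - 2 * (momentGF true 0 + momentGF false 0)) * (momentGF true 1 + momentGF false 1) =
        X * (1 - momentGF true 0) - 2 * X * momentGF true 1 ∧
      (1 - 2 * (momentGF true 0 + momentGF false 0)) * (momentGF true 2 + momentGF false 2) =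
        (momentGF true 1 + momentGF false 1) ^ 2 - 2 * X * momentGF true 2
          - X * momentGF true 1 := by
  have h := indecGF_add_sub_sq (1 + Polynomial.X : Polynomial ℝ)
  rw [mul_comm X, mul_assoc] at h
  obtain ⟨h₀, h₁, h₂⟩ := innerCoeff_of_sub_sq (by compute_degree) h
  simp only [map_add, Polynomial.coeff_add, Polynomial.coeff_one, ↓reduceIte,
    Polynomial.coeff_X_zero, add_zero, map_one, innerCoeff_X_mul, map_sub, innerCoeff_one,
    one_ne_zero, zero_sub, mul_neg, Polynomial.coeff_X_one, zero_add, one_mul,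
    OfNat.ofNat_ne_zero] at h₀ h₁ h₂
  simp only [momentGF]
  exact ⟨by linear_combination h₀, by linear_combination h₁, by linear_combination h₂⟩

theorem momentGF_true_sub_false :
    momentGF true 0 - momentGF false 0 - (momentGF true 0 - momentGF false 0) ^ 2 = 0 ∧
      (1 - 2 * (momentGF true 0 - momentGF false 0)) * (momentGF true 1 - momentGF false 1) =
        -X * (1 - momentGF true 0) ∧
      (1 - 2 * (momentGF true 0 - momentGF false 0)) * (momentGF true 2 - momentGF false 2) =
        (momentGF true 1 - momentGF false 1) ^ 2 + X * momentGF true 1 := by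
  have h := indecGF_sub_sub_sq (1 + Polynomial.X : Polynomial ℝ)
  rw [mul_comm X, mul_assoc] at h
  obtain ⟨h₀, h₁, h₂⟩ := innerCoeff_of_sub_sq (by compute_degree) h
  simp only [map_sub, sub_add_cancel_left, Polynomial.coeff_neg, Polynomial.coeff_X_zero, neg_zero,
    map_zero, innerCoeff_X_mul, innerCoeff_one, ↓reduceIte, zero_mul, one_ne_zero, zero_sub,
    mul_neg, Polynomial.coeff_X_one, map_neg, map_one, neg_mul, one_mul, zero_add,
    OfNat.ofNat_ne_zero, add_zero, neg_neg] at h₀ h₁ h₂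
  simp only [momentGF]
  exact ⟨by linear_combination h₀, by linear_combination h₁, by linear_combination h₂⟩

theorem ne_zero_of_constantCoeff_ne_zero {S : Type*} [Semiring S] {f : S⟦X⟧}
    (h : constantCoeff f ≠ 0) : f ≠ 0 := by
  rintro rfl
  exact h (map_zero _)

theorem momentGF_false_zero : momentGF false 0 = momentGF true 0 := by
  have hne : 1 - (momentGF true 0 - momentGF false 0) ≠ 0 :=
    ne_zero_of_constantCoeff_ne_zero (by simp [constantCoeff_momentGF])
  have h : (1 - (momentGF true 0 - momentGF false 0)) * (momentGF true 0 - momentGF false 0) = 0 :=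
    by linear_combination momentGF_true_sub_false.1
  exact (sub_eq_zero.1 ((mul_eq_zero.1 h).resolve_left hne)).symm

theorem two_mul_momentGF_zero_sq :
    2 * momentGF true 0 ^ 2 = (1 + X) * momentGF true 0 - X := by
  have h := momentGF_true_add_false.1
  rw [momentGF_false_zero] at h
  have h2 : (2 : ℝ⟦X⟧) ≠ 0 :=
    ne_zero_of_constantCoeff_ne_zero (by rw [map_ofNat]; exact two_ne_zero)
  refine mul_left_cancel₀ h2 ?_
  linear_combination -h

theorem derivative_momentGF_zero :
    (1 + X - 4 * momentGF true 0) * d⁄dX ℝ (momentGF true 0) = 1 - momentGF true 0 := by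
  have h := congrArg (d⁄dX ℝ) two_mul_momentGF_zero_sq
  have h2 : d⁄dX ℝ (2 : ℝ⟦X⟧) = 0 := by simpa using (d⁄dX ℝ).map_natCast 2
  simp only [Derivation.leibniz, map_sub, map_add, Derivation.leibniz_pow, smul_eq_mul,
    nsmul_eq_mul, derivative_X, Derivation.map_one_eq_zero, h2, Nat.cast_ofNat] at h
  linear_combination -h

theorem derivative_derivative_momentGF_zero :
    (1 + X - 4 * momentGF true 0) * d⁄dX ℝ (d⁄dX ℝ (momentGF true 0)) =
      4 * d⁄dX ℝ (momentGF true 0) ^ 2 - 2 * d⁄dX ℝ (momentGF true 0) := by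
  have h := congrArg (d⁄dX ℝ) derivative_momentGF_zero
  have h4 : d⁄dX ℝ (4 : ℝ⟦X⟧) = 0 := by simpa using (d⁄dX ℝ).map_natCast 4
  simp only [Derivation.leibniz, map_sub, map_add, smul_eq_mul, derivative_X,
    Derivation.map_one_eq_zero, h4] at h
  linear_combination h

theorem discriminant_momentGF_zero_ne_zero : 1 + X - 4 * momentGF true 0 ≠ 0 :=
  ne_zero_of_constantCoeff_ne_zero (by simp [constantCoeff_momentGF])

theorem four_mul_one_sub_momentGF_zero_mul_derivative :
    4 * ((1 - momentGF true 0) * d⁄dX ℝ (momentGF true 0)) =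
      (3 - X) * d⁄dX ℝ (momentGF true 0) + 1 - momentGF true 0 := by
  linear_combination derivative_momentGF_zero

theorem linear_ode_momentGF_zero :
    d⁄dX ℝ (momentGF true 0) - 6 * (X * d⁄dX ℝ (momentGF true 0)) +
      X * (X * d⁄dX ℝ (momentGF true 0)) =
        1 - X - (3 * momentGF true 0 - X * momentGF true 0) := by
  linear_combination (1 + X - 4 * momentGF true 0) * derivative_momentGF_zero
    - (8 * d⁄dX ℝ (momentGF true 0) - 2) * two_mul_momentGF_zero_sq

theorem momentGF_one_true_sub_false :
    momentGF true 1 - momentGF false 1 = -X * (1 - momentGF true 0) := by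
  linear_combination momentGF_true_sub_false.2.1 - 2 * (momentGF true 1 - momentGF false 1) *
    momentGF_false_zero

theorem momentGF_one_true_add_false :
    momentGF true 1 + momentGF false 1 = X * (1 + X) * d⁄dX ℝ (momentGF true 0) := by
  refine mul_left_cancel₀ discriminant_momentGF_zero_ne_zero ?_
  have h := momentGF_true_add_false.2.1
  rw [momentGF_false_zero] at h
  linear_combination h - X * momentGF_one_true_sub_false - X * (1 + X) * derivative_momentGF_zero

theorem two_mul_momentGF_one : 2 * momentGF true 1 =
    X * ((1 + X) * d⁄dX ℝ (momentGF true 0) + momentGF true 0 - 1) := by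
  linear_combination momentGF_one_true_add_false + momentGF_one_true_sub_false

theorem momentGF_two_true_sub_false : momentGF true 2 - momentGF false 2 =
    X ^ 2 * (1 - momentGF true 0) ^ 2 + X * momentGF true 1 := by
  have h := momentGF_true_sub_false.2.2
  rw [momentGF_false_zero, momentGF_one_true_sub_false] at h
  linear_combination h

theorem four_mul_momentGF_two_true_add_false : 4 * (momentGF true 2 + momentGF false 2) =
    X ^ 2 * (1 + X) ^ 2 * d⁄dX ℝ (d⁄dX ℝ (momentGF true 0)) +
      2 * X ^ 2 * (1 + X) * d⁄dX ℝ (momentGF true 0) -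
      4 * X ^ 3 * ((1 - momentGF true 0) * d⁄dX ℝ (momentGF true 0)) := by
  refine mul_left_cancel₀ discriminant_momentGF_zero_ne_zero ?_
  have h := momentGF_true_add_false.2.2
  rw [momentGF_false_zero, momentGF_one_true_add_false] at h
  linear_combination 4 * h - 4 * X * momentGF_two_true_sub_false
    - 2 * X * (1 + X) * two_mul_momentGF_one
    - X ^ 2 * (1 + X) ^ 2 * derivative_derivative_momentGF_zero
    - (2 * X ^ 2 * (1 + X) - 4 * X ^ 3 * (1 - momentGF true 0)) * derivative_momentGF_zero

theorem eight_mul_momentGF_two : 8 * momentGF true 2 =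
    X ^ 2 * (1 + X) ^ 2 * d⁄dX ℝ (d⁄dX ℝ (momentGF true 0)) +
      X ^ 2 * (4 + X + X ^ 2) * d⁄dX ℝ (momentGF true 0) +
      X ^ 2 * (3 * X - 4) * momentGF true 0 + X ^ 2 * (2 - 3 * X) := by
  linear_combination four_mul_momentGF_two_true_add_false + 4 * momentGF_two_true_sub_false
    + 2 * X * two_mul_momentGF_one + 2 * X ^ 2 * two_mul_momentGF_zero_sq
    - X ^ 3 * four_mul_one_sub_momentGF_zero_mul_derivative

/-- The number of sum-indecomposable separable permutations of `[n]`. -/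
noncomputable def indecCount (n : ℕ) : ℕ := #{σ ∈ SEP n | Bplus σ = n}

theorem coeff_momentGF_zero (b : Bool) (n : ℕ) : coeff n (momentGF b 0) = indecCount n := by
  simp [coeff_momentGF, indecCount]

theorem coeff_ofNat_mul {S : Type*} [Semiring S] (k : ℕ) [k.AtLeastTwo] (n : ℕ) (f : S⟦X⟧) :
    coeff n (ofNat(k) * f) = ofNat(k) * coeff n f := by
  rw [← map_ofNat C, coeff_C_mul]

theorem indecCount_zero : indecCount 0 = 0 := by
  simp [indecCount, fun σ : Equiv.Perm (Fin 0) => (Bplus_pos σ).ne']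

theorem indecCount_one : indecCount 1 = 1 := by
  simp [indecCount, SEP_one, Finset.filter_singleton, Bplus_one]

theorem indecCount_two : indecCount 2 = 1 := by
  have h := congrArg (coeff 1) linear_ode_momentGF_zero
  simp only [map_sub, map_add, coeff_ofNat_mul, coeff_succ_X_mul (n := 0), coeff_zero_X_mul,
    coeff_derivative, coeff_one, coeff_X, coeff_momentGF_zero, zero_add, Nat.reduceAdd,
    indecCount_zero, indecCount_one, Nat.cast_zero, Nat.cast_one, one_ne_zero, if_false,
    if_true] at h
  have : (indecCount 2 : ℝ) = 1 := by linear_combination h / 2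
  exact_mod_cast this

theorem indecCount_add_three (n : ℕ) :
    (n + 3) * (indecCount (n + 3) : ℝ) =
      (6 * n + 9) * indecCount (n + 2) - n * indecCount (n + 1) := by
  have h := congrArg (coeff (n + 2)) linear_ode_momentGF_zero
  simp only [map_sub, map_add, coeff_ofNat_mul, coeff_succ_X_mul, coeff_derivative, coeff_one,
    coeff_X, coeff_momentGF_zero, Nat.cast_add, Nat.cast_ofNat, Nat.cast_one,
    Nat.add_eq_zero_iff, OfNat.ofNat_ne_zero, and_false, ↓reduceIte, Nat.reduceEqDiff, sub_self,
    zero_sub, neg_sub] at h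
  linear_combination h

theorem coeff_momentGF_one (n : ℕ) : 2 * coeff (n + 2) (momentGF true 1) =
    (n + 2) * (indecCount (n + 2) + indecCount (n + 1)) := by
  have h : 2 * momentGF true 1 = X * d⁄dX ℝ (momentGF true 0) +
      X * (X * d⁄dX ℝ (momentGF true 0)) + X * momentGF true 0 - X := by
    linear_combination two_mul_momentGF_one
  replace h := congrArg (coeff (n + 2)) h
  simp only [map_sub, map_add, coeff_ofNat_mul, coeff_succ_X_mul, coeff_derivative, coeff_X,
    coeff_momentGF_zero, Nat.cast_add, Nat.cast_one, Nat.reduceEqDiff, ↓reduceIte, sub_zero] at h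
  linear_combination h

theorem coeff_momentGF_two (n : ℕ) : 8 * coeff (n + 4) (momentGF true 2) =
    (n + 4) * ((n + 3) * indecCount (n + 4) + 2 * (n + 3) * indecCount (n + 3)
      + n * indecCount (n + 2) + indecCount (n + 1)) := by
  have h : 8 * momentGF true 2 =
      X * (X * d⁄dX ℝ (d⁄dX ℝ (momentGF true 0)))
      + 2 * (X * (X * (X * d⁄dX ℝ (d⁄dX ℝ (momentGF true 0)))))
      + X * (X * (X * (X * d⁄dX ℝ (d⁄dX ℝ (momentGF true 0)))))
      + 4 * (X * (X * d⁄dX ℝ (momentGF true 0)))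
      + X * (X * (X * d⁄dX ℝ (momentGF true 0)))
      + X * (X * (X * (X * d⁄dX ℝ (momentGF true 0))))
      + 3 * (X * (X * (X * momentGF true 0))) - 4 * (X * (X * momentGF true 0))
      + 2 * (X * X) - 3 * (X * (X * X)) := by
    linear_combination eight_mul_momentGF_two
  replace h := congrArg (coeff (n + 4)) h
  simp only [map_sub, map_add, coeff_ofNat_mul, coeff_succ_X_mul, coeff_derivative, coeff_X,
    coeff_momentGF_zero, Nat.cast_add, Nat.cast_ofNat, Nat.cast_one, Nat.reduceEqDiff,
    ↓reduceIte, mul_zero, add_zero, sub_zero] at h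
  linear_combination h

end

/-! ### Ratios of consecutive counts -/

theorem indecCount_pos_and_le_succ (n : ℕ) :
    0 < indecCount (n + 1) ∧ indecCount (n + 1) ≤ indecCount (n + 2) := by
  induction n with
  | zero => simp [indecCount_one, indecCount_two]
  | succ n ih =>
    obtain ⟨hpos, hle⟩ := ih
    refine ⟨hpos.trans_le hle, ?_⟩
    have hle' : (indecCount (n + 1) : ℝ) ≤ indecCount (n + 2) := by exact_mod_cast hle
    have hpos' : (0 : ℝ) ≤ indecCount (n + 2) := Nat.cast_nonneg _
    have : (n + 3) * (indecCount (n + 2) : ℝ) ≤ (n + 3) * indecCount (n + 3) := by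
      rw [indecCount_add_three]
      nlinarith [mul_le_mul_of_nonneg_left hle' n.cast_nonneg, hpos']
    exact_mod_cast le_of_mul_le_mul_left this (by positivity)

theorem indecCount_pos (n : ℕ) : 0 < indecCount (n + 1) := (indecCount_pos_and_le_succ n).1

/-- The ratio of consecutive numbers of indecomposable separable permutations; the index is
shifted so that the denominator is positive. -/
noncomputable def indecRatio (n : ℕ) : ℝ := indecCount (n + 1) / indecCount (n + 2)

theorem indecRatio_zero : indecRatio 0 = 1 := by
  simp [indecRatio, indecCount_one, indecCount_two]

theorem indecRatio_pos (n : ℕ) : 0 < indecRatio n :=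
  div_pos (Nat.cast_pos.2 (indecCount_pos n)) (Nat.cast_pos.2 (indecCount_pos (n + 1)))

theorem indecRatio_le_one (n : ℕ) : indecRatio n ≤ 1 :=
  div_le_one_of_le₀ (Nat.cast_le.2 (indecCount_pos_and_le_succ n).2) (Nat.cast_nonneg _)

theorem indecRatio_mul_indecCount (n : ℕ) :
    indecRatio n * indecCount (n + 2) = indecCount (n + 1) :=
  div_mul_cancel₀ _ (Nat.cast_pos.2 (indecCount_pos (n + 1))).ne'

theorem indecRatio_succ_mul (n : ℕ) :
    indecRatio (n + 1) * (6 * n + 9 - n * indecRatio n) = n + 3 := by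
  have hpos : (0 : ℝ) < indecCount (n + 3) := Nat.cast_pos.2 (indecCount_pos (n + 2))
  refine mul_right_cancel₀ hpos.ne' ?_
  have h := indecRatio_mul_indecCount (n + 1)
  linear_combination (6 * n + 9 - n * indecRatio n) * h - n * indecRatio_mul_indecCount n
    - indecCount_add_three n

theorem indecRatio_succ_le (n : ℕ) : indecRatio (n + 1) ≤ 1 / 3 := by
  have h := indecRatio_succ_mul n
  have hn : (n : ℝ) * indecRatio n ≤ n := mul_le_of_le_one_right n.cast_nonneg (indecRatio_le_one n)
  have hpos := indecRatio_pos (n + 1)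
  nlinarith [mul_nonneg hpos.le (sub_nonneg.2 hn), mul_nonneg hpos.le n.cast_nonneg (α := ℝ)]

theorem indecRatio_sub_succ (n : ℕ) :
    (n + 3) * (n + 4) * (indecRatio (n + 1) - indecRatio (n + 2)) =
      indecRatio (n + 1) * indecRatio (n + 2) *
        (n * (n + 4) * (indecRatio n - indecRatio (n + 1)) + (9 - 3 * indecRatio (n + 1))) := by
  have h₁ := indecRatio_succ_mul n
  have h₂ := indecRatio_succ_mul (n + 1)
  push_cast at h₂
  linear_combination (n + 4) * indecRatio (n + 2) * h₁ - (n + 3) * indecRatio (n + 1) * h₂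

theorem indecRatio_sub_succ_bounds (n : ℕ) :
    0 ≤ indecRatio n - indecRatio (n + 1) ∧
      (n + 2) * (n + 3) * (indecRatio n - indecRatio (n + 1)) ≤ 4 := by
  induction n with
  | zero =>
    have h := indecRatio_succ_mul 0
    norm_num [indecRatio_zero] at h ⊢
    constructor <;> linarith
  | succ n ih =>
    obtain ⟨hnonneg, hle⟩ := ih
    have heq := indecRatio_sub_succ n
    have hpos₁ := indecRatio_pos (n + 1)
    have hpos₂ := indecRatio_pos (n + 2)
    have hprod : indecRatio (n + 1) * indecRatio (n + 2) ≤ 1 / 3 * (1 / 3) :=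
      mul_le_mul (indecRatio_succ_le n) (indecRatio_succ_le (n + 1)) hpos₂.le (by norm_num)
    generalize indecRatio n - indecRatio (n + 1) = e at hnonneg hle heq
    have hbracket : 0 ≤ n * (n + 4) * e + (9 - 3 * indecRatio (n + 1)) := by
      have := indecRatio_succ_le n
      have : 0 ≤ n * (n + 4) * e := by positivity
      linarith
    have hbracket' : n * (n + 4) * e + (9 - 3 * indecRatio (n + 1)) ≤ 13 := by nlinarith
    have hn : (0 : ℝ) < (n + 3) * (n + 4) := by positivity
    push_cast
    refine ⟨nonneg_of_mul_nonneg_right (heq ▸ by positivity) hn, ?_⟩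
    calc ((n : ℝ) + 1 + 2) * (n + 1 + 3) * (indecRatio (n + 1) - indecRatio (n + 1 + 1))
        = indecRatio (n + 1) * indecRatio (n + 2) *
          (n * (n + 4) * e + (9 - 3 * indecRatio (n + 1))) := by rw [← heq]; ring
      _ ≤ 1 / 3 * (1 / 3) * 13 := mul_le_mul hprod hbracket' hbracket (by norm_num)
      _ ≤ 4 := by norm_num

theorem antitone_indecRatio : Antitone indecRatio :=
  antitone_nat_of_succ_le fun n => sub_nonneg.1 (indecRatio_sub_succ_bounds n).1

theorem tendsto_mul_indecRatio_sub_succ :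
    Tendsto (fun n : ℕ => n * (indecRatio n - indecRatio (n + 1))) atTop (nhds 0) := by
  refine squeeze_zero (fun n => mul_nonneg n.cast_nonneg (indecRatio_sub_succ_bounds n).1)
    (fun n => ?_) (tendsto_const_div_atTop_nhds_zero_nat 4)
  obtain ⟨hnonneg, hle⟩ := indecRatio_sub_succ_bounds n
  rcases n.eq_zero_or_pos with rfl | hn
  · simp
  · rw [le_div_iff₀ (Nat.cast_pos.2 hn)]
    nlinarith

/-- Dividing the recurrence by `n` shows that the limit is the root of `x² - 6x + 1` in
`[0, 1]`. -/
theorem tendsto_indecRatio : Tendsto indecRatio atTop (nhds (3 - 2 * √2)) := by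
  obtain ⟨x, hx⟩ : ∃ x, Tendsto indecRatio atTop (nhds x) :=
    ⟨_, tendsto_atTop_ciInf antitone_indecRatio
      ⟨0, by rintro _ ⟨n, rfl⟩; exact (indecRatio_pos n).le⟩⟩
  have hx' := (tendsto_add_atTop_iff_nat 1).2 hx
  have hlim : Tendsto (fun n : ℕ => 1 + (3 - 9 * indecRatio (n + 1)) * (n : ℝ)⁻¹) atTop
      (nhds (1 + (3 - 9 * x) * 0)) :=
    (((hx'.const_mul 9).const_sub 3).mul tendsto_inv_atTop_nhds_zero_nat).const_add 1
  have hquad : x * (6 - x) = 1 + (3 - 9 * x) * 0 := by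
    refine tendsto_nhds_unique ((hx'.mul (hx.const_sub 6)).congr' ?_) hlim
    filter_upwards [eventually_gt_atTop 0] with n hn
    have hn' : (n : ℝ) ≠ 0 := Nat.cast_ne_zero.2 hn.ne'
    field_simp
    linear_combination indecRatio_succ_mul n
  have hle : x ≤ 1 := le_of_tendsto' hx indecRatio_le_one
  have hsqrt : √2 = (3 - x) / 2 := by
    rw [Real.sqrt_eq_iff_eq_sq (by norm_num) (by linarith)]
    linear_combination hquad / 4
  rwa [hsqrt, show 3 - 2 * ((3 - x) / 2) = x by ring]

/-! ### Variance under a bounded perturbation -/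

section

open scoped BigOperators

/-- The variance of `f` with respect to the uniform probability measure on `s`. -/
noncomputable def uniformVar {ι : Type*} (s : Finset ι) (f : ι → ℝ) : ℝ :=
  𝔼 i ∈ s, (f i - 𝔼 j ∈ s, f j) ^ 2

theorem sepVar_eq_uniformVar (n : ℕ) (f : Equiv.Perm (Fin n) → ℝ) :
    sepVar n f = uniformVar (SEP n) f := by
  simp only [sepVar, sepExp, uniformVar, Finset.expect_eq_sum_div_card]

theorem uniformVar_eq {ι : Type*} {s : Finset ι} (hs : s.Nonempty) (f : ι → ℝ) :
    uniformVar s f = 𝔼 i ∈ s, f i ^ 2 - (𝔼 i ∈ s, f i) ^ 2 := by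
  simp only [uniformVar, sub_sq, Finset.expect_add_distrib, Finset.expect_sub_distrib,
    Finset.expect_const hs, ← Finset.expect_mul, ← Finset.mul_expect]
  ring

theorem abs_uniformVar_sub_le {ι : Type*} {s : Finset ι} {f g : ι → ℝ} {c : ℝ} (hc : 0 ≤ c)
    (h : ∀ i ∈ s, |f i - g i| ≤ c) :
    |uniformVar s f - uniformVar s g| ≤ 4 * c * √(uniformVar s g) + 4 * c ^ 2 := by
  rcases s.eq_empty_or_nonempty with rfl | hs
  · simpa [uniformVar] using sq_nonneg c
  set F := 𝔼 i ∈ s, f i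
  set G := 𝔼 i ∈ s, g i
  let d (i : ι) : ℝ := (f i - F) - (g i - G)
  have hd_abs : ∀ i ∈ s, |d i| ≤ 2 * c := by
    have hmean : |F - G| ≤ c := by
      rw [← Finset.expect_sub_distrib]
      exact (Finset.abs_expect_le _ _).trans (Finset.expect_le hs h)
    intro i hi
    calc |d i| = |(f i - g i) - (F - G)| := by congr 1; ring
      _ ≤ |f i - g i| + |F - G| := abs_sub _ _
      _ ≤ 2 * c := by linarith [h i hi]
  have hd_nonneg : 0 ≤ 𝔼 i ∈ s, d i ^ 2 := Finset.expect_nonneg fun i _ => sq_nonneg _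
  have hd : 𝔼 i ∈ s, d i ^ 2 ≤ (2 * c) ^ 2 :=
    Finset.expect_le hs fun i hi =>
      sq_le_sq' (abs_le.1 (hd_abs i hi)).1 (abs_le.1 (hd_abs i hi)).2
  have hcov : |𝔼 i ∈ s, (g i - G) * d i| ≤ 2 * c * √(uniformVar s g) := by
    have hvar : 0 ≤ uniformVar s g := Finset.expect_nonneg fun i _ => sq_nonneg _
    rw [← Real.sqrt_sq (by positivity : 0 ≤ 2 * c), ← Real.sqrt_mul (sq_nonneg _), mul_comm]
    exact Real.abs_le_sqrt ((Finset.expect_mul_sq_le_sq_mul_sq _ _ _).trans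
      (mul_le_mul_of_nonneg_left hd hvar))
  have hexpand : uniformVar s f - uniformVar s g =
      2 * 𝔼 i ∈ s, (g i - G) * d i + 𝔼 i ∈ s, d i ^ 2 := by
    rw [uniformVar, uniformVar, ← Finset.expect_sub_distrib, Finset.mul_expect,
      ← Finset.expect_add_distrib]
    exact Finset.expect_congr rfl fun i _ => by ring
  rw [hexpand, abs_le]
  constructor <;> nlinarith [abs_le.1 hcov]

theorem tendsto_uniformVar_div_of_abs_sub_le {ι : ℕ → Type*} {s : ∀ n, Finset (ι n)}
    {f g : ∀ n, ι n → ℝ} {c L : ℝ} (hc : 0 ≤ c)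
    (h : ∀ᶠ n in atTop, ∀ i ∈ s n, |f n i - g n i| ≤ c)
    (hg : Tendsto (fun n : ℕ => uniformVar (s n) (g n) / n) atTop (nhds L)) :
    Tendsto (fun n : ℕ => uniformVar (s n) (f n) / n) atTop (nhds L) := by
  have hsqrt : Tendsto (fun n : ℕ => (√(n : ℝ))⁻¹) atTop (nhds 0) :=
    (Real.tendsto_sqrt_atTop.comp tendsto_natCast_atTop_atTop).inv_tendsto_atTop
  have herr : Tendsto
      (fun n : ℕ => 4 * c * √(uniformVar (s n) (g n) / n) * (√(n : ℝ))⁻¹ + 4 * c ^ 2 / n)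
      atTop (nhds 0) := by
    simpa using ((hg.sqrt.const_mul (4 * c)).mul hsqrt).add
      (tendsto_const_div_atTop_nhds_zero_nat (4 * c ^ 2))
  have hdiff : Tendsto
      (fun n : ℕ => uniformVar (s n) (f n) / n - uniformVar (s n) (g n) / n) atTop (nhds 0) := by
    refine squeeze_zero_norm' ?_ herr
    filter_upwards [h] with n hn
    rw [Real.norm_eq_abs, ← sub_div, abs_div, Nat.abs_cast, Real.sqrt_div' _ n.cast_nonneg,
      mul_assoc, ← div_eq_mul_inv, div_div, Real.mul_self_sqrt n.cast_nonneg, ← mul_div_assoc,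
      ← add_div]
    exact div_le_div_of_nonneg_right (abs_uniformVar_sub_le hc hn) n.cast_nonneg
  simpa using hdiff.add hg

end

/-! ### The variance of the padded number of changes -/

/-- The number of letter changes of `permWord σ` padded on both sides by a descent if `σ` is
sum-decomposable and by an ascent otherwise. It agrees with `altTypeLen σ s s` up to `2`, and
the choice of the padding makes its law on `SEP n` equal to its law on the indecomposable
permutations. -/
noncomputable def paddedChanges {n : ℕ} (σ : Equiv.Perm (Fin n)) : ℕ :=
  if Bplus σ < n then changes false (permWord σ ++ [false])
  else changes true (permWord σ ++ [true])

theorem abs_altTypeLen_sub_paddedChanges_le {n : ℕ} (hn : 0 < n) (σ : Equiv.Perm (Fin n))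
    (s : Bool) : |(altTypeLen σ s s : ℝ) - paddedChanges σ| ≤ 2 := by
  have key (p : Bool) : |(altTypeLen σ s s : ℝ) - changes p (permWord σ ++ [p])| ≤ 2 := by
    have hlen := altTypeLen_self hn σ s
    have hpad_le := changes_append_singleton_le p p (permWord σ)
    have hle_pad := changes_le_of_sublist p (List.sublist_append_left (permWord σ) [p])
    have hfirst (a b : Bool) : changes a (permWord σ) ≤ changes b (permWord σ) + 1 := by
      have := changes_le_changes_cons a b (permWord σ)
      rw [changes] at this
      split_ifs at this <;> omega
    have h₁ := hfirst p (!s)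
    have h₂ := hfirst (!s) p
    rw [abs_sub_le_iff, sub_le_iff_le_add, sub_le_iff_le_add]
    constructor <;> norm_cast <;> omega
  rw [paddedChanges]
  split_ifs <;> exact key _

theorem sum_paddedChanges {M : Type*} [AddCommMonoid M] {n : ℕ} (hn : 2 ≤ n) (G : ℕ → M) :
    ∑ σ ∈ SEP n, G (paddedChanges σ) =
      2 • ∑ σ ∈ SEP n with Bplus σ = n, G (changes true (permWord σ ++ [true])) := by
  have hnot : {σ ∈ SEP n | ¬ Bplus σ < n} = {σ ∈ SEP n | Bplus σ = n} :=
    Finset.filter_congr fun σ _ => not_lt.trans (Bplus_le (two_pos.trans_le hn) σ).ge_iff_eq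
  rw [← Finset.sum_filter_add_sum_filter_not (SEP n) (fun σ => Bplus σ < n), hnot, two_nsmul]
  congr 1
  · rw [sum_Bplus_eq_self hn]
    refine Finset.sum_congr rfl fun σ hσ => ?_
    rw [paddedChanges, if_pos (Finset.mem_filter.1 hσ).2, permWord_complPerm,
      ← changes_map Bool.not_injective false, List.map_append]
    rfl
  · refine Finset.sum_congr rfl fun σ hσ => ?_
    rw [paddedChanges, if_neg (Finset.mem_filter.1 hσ).2.not_lt]

section

open PowerSeries
open scoped BigOperators

theorem card_SEP {n : ℕ} (hn : 2 ≤ n) : #(SEP n) = 2 * indecCount n := by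
  simpa [indecCount] using sum_paddedChanges hn fun _ => (1 : ℕ)

theorem expect_choose_paddedChanges {n : ℕ} (hn : 2 ≤ n) (j : ℕ) :
    𝔼 σ ∈ SEP n, ((paddedChanges σ).choose j : ℝ) =
      coeff n (momentGF true j) / indecCount n := by
  rw [Finset.expect_eq_sum_div_card, sum_paddedChanges hn fun k => (k.choose j : ℝ), card_SEP hn,
    coeff_momentGF, nsmul_eq_mul, Nat.cast_mul, mul_div_mul_left _ _ (by norm_num)]

theorem expect_paddedChanges (n : ℕ) :
    𝔼 σ ∈ SEP (n + 4), (paddedChanges σ : ℝ) = (n + 4) / 2 * (1 + indecRatio (n + 2)) := by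
  have h := expect_choose_paddedChanges (by omega : 2 ≤ n + 4) 1
  simp only [Nat.choose_one_right] at h
  have hpos : (0 : ℝ) < indecCount (n + 4) := Nat.cast_pos.2 (indecCount_pos (n + 3))
  rw [h, div_eq_iff hpos.ne']
  have hcoeff := coeff_momentGF_one (n + 2)
  push_cast at hcoeff
  linear_combination hcoeff / 2 - (n + 4) / 2 * indecRatio_mul_indecCount (n + 2)

theorem expect_choose_two_paddedChanges (n : ℕ) :
    𝔼 σ ∈ SEP (n + 4), ((paddedChanges σ).choose 2 : ℝ) =
      (n + 4) / 8 * ((n + 3) * (1 + 2 * indecRatio (n + 2)) +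
        indecRatio (n + 2) * indecRatio (n + 1) * (n + indecRatio n)) := by
  have hpos : (0 : ℝ) < indecCount (n + 4) := Nat.cast_pos.2 (indecCount_pos (n + 3))
  rw [expect_choose_paddedChanges (by omega), div_eq_iff hpos.ne']
  have h₁ : indecRatio (n + 2) * indecCount (n + 4) = indecCount (n + 3) :=
    indecRatio_mul_indecCount (n + 2)
  have h₂ : indecRatio (n + 2) * indecRatio (n + 1) * indecCount (n + 4) = indecCount (n + 2) := by
    rw [mul_right_comm, h₁, mul_comm, indecRatio_mul_indecCount (n + 1)]
  have h₃ : indecRatio (n + 2) * indecRatio (n + 1) * indecRatio n * indecCount (n + 4) =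
      indecCount (n + 1) := by
    rw [mul_right_comm, h₂, mul_comm, indecRatio_mul_indecCount n]
  linear_combination (coeff_momentGF_two n - (n + 4) * (2 * (n + 3) * h₁ + n * h₂ + h₃)) / 8

theorem sepVar_paddedChanges (n : ℕ) :
    sepVar (n + 4) (fun σ => (paddedChanges σ : ℝ)) =
      (n + 4) / 4 * (1 + (n + 4) * (indecRatio (n + 1) - indecRatio (n + 2)) * indecRatio (n + 2)
        - 4 * (indecRatio (n + 2) * indecRatio (n + 1))
        + indecRatio (n + 2) * indecRatio (n + 1) * indecRatio n) := by
  have hne : (SEP (n + 4)).Nonempty := by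
    rw [← Finset.card_pos, card_SEP (by omega)]
    exact Nat.mul_pos two_pos (indecCount_pos (n + 3))
  have hsq (k : ℕ) : (k : ℝ) ^ 2 = 2 * k.choose 2 + k := by
    rw [Nat.cast_choose_two]
    ring
  simp only [sepVar_eq_uniformVar, uniformVar_eq hne, hsq, Finset.expect_add_distrib,
    ← Finset.mul_expect, expect_paddedChanges, expect_choose_two_paddedChanges]
  ring

end

theorem tendsto_sepVar_paddedChanges :
    Tendsto (fun n : ℕ => sepVar n (fun σ => (paddedChanges σ : ℝ)) / n) atTop
      (nhds ((16 - 11 * √2) / 2)) := by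
  rw [← tendsto_add_atTop_iff_nat 4]
  have hr (k : ℕ) := (tendsto_add_atTop_iff_nat k).2 tendsto_indecRatio
  have hdiff : Tendsto
      (fun n : ℕ => (n + 4) * (indecRatio (n + 1) - indecRatio (n + 2))) atTop (nhds 0) := by
    convert ((tendsto_add_atTop_iff_nat 1).2 tendsto_mul_indecRatio_sub_succ).add
      (((hr 1).sub (hr 2)).const_mul 3) using 2
    · push_cast
      ring
    · simp
  have hlim := ((((hdiff.mul (hr 2)).const_add 1).sub
    (((hr 2).mul (hr 1)).const_mul 4)).add (((hr 2).mul (hr 1)).mul tendsto_indecRatio)).div_const 4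
  convert hlim using 2 with n
  · rw [sepVar_paddedChanges]
    push_cast
    field_simp
  · have hsqrt : √2 ^ 2 = 2 := Real.sq_sqrt zero_le_two
    linear_combination (√2 * 2 - 5) * hsqrt

/-- The variances of `Aₙ^{+,+}` and `Aₙ^{-,-}` are asymptotic to `((16 - 11√2)/2) n`. -/
theorem var_altTypeLen_pp_asymp :
    Tendsto (fun n : ℕ =>
        sepVar n (fun σ => (altTypeLen σ true true : ℝ)) / n) atTop
      (nhds ((16 - 11 * Real.sqrt 2) / 2)) ∧
    Tendsto (fun n : ℕ =>
        sepVar n (fun σ => (altTypeLen σ false false : ℝ)) / n) atTop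
      (nhds ((16 - 11 * Real.sqrt 2) / 2)) := by
  have hpadded := tendsto_sepVar_paddedChanges
  simp only [sepVar_eq_uniformVar] at hpadded ⊢
  have h (s : Bool) := tendsto_uniformVar_div_of_abs_sub_le
    (f := fun _ σ => (altTypeLen σ s s : ℝ)) zero_le_two
    ((eventually_gt_atTop 0).mono fun _ hn σ _ => abs_altTypeLen_sub_paddedChanges_le hn σ s)
    hpadded
  exact ⟨h true, h false⟩
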